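/- arXiv:2104.07466 — 8 statements merged into one kernel-verified Lean document; each statement's English description precedes it below -/
import Mathlib

section
/- Let P = (V, E, ⟨V₁, V_R⟩) be an MDP and let C ⊆ V be a strongly connected set. Let U = { v ∈ C ∩ V_R : Out(v) ∩ (V \ C) ≠ ∅ } be the set of random vertices in C that have an edge leaving C, and let Z = Attr_R^P(U) ∩ C. Then for every nontrivial end-component X of P with X ⊆ C we have Z ∩ X = ∅. -/
/-- A path from `u` to `w` using only edges whose endpoints lie in `U`. -/
def PathIn {V : Type*} (E : V → V → Prop) (U : Set V) : V → V → Prop :=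
  Relation.ReflTransGen (fun a b => a ∈ U ∧ b ∈ U ∧ E a b)

/-- `U` is strongly connected: any vertex of `U` reaches any other within `U`. -/
def StronglyConnected {V : Type*} (E : V → V → Prop) (U : Set V) : Prop :=
  ∀ u ∈ U, ∀ w ∈ U, PathIn E U u w

/-- `U` is an end-component of the MDP with edges `E` and random vertices `VR`. -/
def IsEC {V : Type*} (E : V → V → Prop) (VR U : Set V) : Prop :=
  StronglyConnected E U ∧ ∀ u ∈ U ∩ VR, ∀ w, E u w → w ∈ U

/-- A nontrivial end-component: an EC with at least 2 vertices. -/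
def IsNontrivialEC {V : Type*} (E : V → V → Prop) (VR U : Set V) : Prop :=
  IsEC E VR U ∧ 2 ≤ U.ncard

/-- A maximal end-component: a nontrivial EC maximal w.r.t. inclusion among nontrivial ECs. -/
def IsMEC {V : Type*} (E : V → V → Prop) (VR U : Set V) : Prop :=
  IsNontrivialEC E VR U ∧ ∀ U', IsNontrivialEC E VR U' → U ⊆ U' → U' = U

/-- The random attractor of `T` in the sub-MDP of `(E, VR)` induced by the vertex
set `S`: the least set containing `T`, closed under adding random vertices of the
sub-MDP with some edge into it, and player-1 vertices of the sub-MDP all of whose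
outgoing edges (in the sub-MDP) lead into it.  (The full MDP is `S = Set.univ`.) -/
inductive AttrR {V : Type*} (S : Set V) (E : V → V → Prop) (VR T : Set V) : V → Prop
  | base {v : V} : v ∈ T → AttrR S E VR T v
  | rand {v w : V} : v ∈ S → v ∈ VR → w ∈ S → E v w → AttrR S E VR T w →
      AttrR S E VR T v
  | play {v : V} : v ∈ S → v ∉ VR → (∀ w ∈ S, E v w → AttrR S E VR T w) →
      AttrR S E VR T v

/-!
A nontrivial end-component is a trap for the random player: its random vertices cannot leave it,
and each of its player-1 vertices has a successor on a path to another of its vertices. An attractor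
can only enter a trap through its target. If `X ⊆ C`, then `X` avoids the target, because an edge
from a random vertex of `X` stays in `X` and hence in `C`.
-/

/-- A trap for the random player in the sub-MDP of `(E, VR)` induced by `S`: once in `X`, random
vertices must stay in `X` and player 1 can choose to. The set `X` need not be contained in `S`. -/
structure IsRandomTrap {V : Type*} (S : Set V) (E : V → V → Prop) (VR X : Set V) : Prop where
  mem_of_edge : ∀ v ∈ X ∩ VR, ∀ w ∈ S, E v w → w ∈ X
  exists_edge : ∀ v ∈ X \ VR, ∃ w ∈ S ∩ X, E v w

section

variable {V : Type*} {S C T X VR : Set V} {E : V → V → Prop} {v : V}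

theorem IsRandomTrap.disjoint_attrR (hX : IsRandomTrap S E VR X) (hT : Disjoint T X) :
    Disjoint {v | AttrR S E VR T v} X := by
  refine Set.disjoint_left.mpr fun v hv ↦ ?_
  induction hv with
  | base hvT => exact Set.disjoint_left.mp hT hvT
  | rand _ hvR hwS hvw _ hwX => exact fun hvX ↦ hwX (hX.mem_of_edge _ ⟨hvX, hvR⟩ _ hwS hvw)
  | play _ hvR _ succ_notMem =>
    intro hvX
    obtain ⟨w, ⟨hwS, hwX⟩, hvw⟩ := hX.exists_edge _ ⟨hvX, hvR⟩
    exact succ_notMem w hwS hvw hwX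

theorem StronglyConnected.exists_edge (hX : StronglyConnected E X) (hX₂ : X.Nontrivial)
    (hv : v ∈ X) : ∃ w ∈ X, E v w := by
  obtain ⟨y, hy, hyv⟩ := hX₂.exists_ne v
  obtain rfl | ⟨w, ⟨_, hw, hvw⟩, _⟩ := (hX v hv y hy).cases_head
  · exact absurd rfl hyv
  · exact ⟨w, hw, hvw⟩

theorem IsEC.isRandomTrap (hX : IsEC E VR X) (hX₂ : X.Nontrivial) (hXS : X ⊆ S) :
    IsRandomTrap S E VR X where
  mem_of_edge v hv w _ hvw := hX.2 v hv w hvw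
  exists_edge v hv := by
    obtain ⟨w, hw, hvw⟩ := hX.1.exists_edge hX₂ hv.1
    exact ⟨w, ⟨hXS hw, hw⟩, hvw⟩

theorem IsEC.disjoint_outgoing_random (hX : IsEC E VR X) (hXC : X ⊆ C) :
    Disjoint {v | v ∈ C ∩ VR ∧ ∃ w, E v w ∧ w ∉ C} X := by
  refine Set.disjoint_left.mpr ?_
  rintro v ⟨⟨_, hvR⟩, w, hvw, hwC⟩ hvX
  exact hwC (hXC (hX.2 v ⟨hvX, hvR⟩ w hvw))

theorem attractor_of_outgoing_random_misses_ECs_general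
    (hX : IsEC E VR X) (hX₂ : X.Nontrivial) (hXC : X ⊆ C) :
    Disjoint {v | AttrR Set.univ E VR {v | v ∈ C ∩ VR ∧ ∃ w, E v w ∧ w ∉ C} v} X :=
  (hX.isRandomTrap hX₂ (Set.subset_univ X)).disjoint_attrR (hX.disjoint_outgoing_random hXC)

end

/-- Let `C` be a strongly connected set, `U` the set of random vertices of `C` with an
edge leaving `C`, and `Z = Attr_R(U) ∩ C` (random attractor in the full MDP).  Then `Z`
meets no nontrivial end-component contained in `C`. -/
theorem attractor_of_outgoing_random_misses_ECs {V : Type*} [Fintype V]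
    (E : V → V → Prop) (VR : Set V) (hNoSelf : ∀ v : V, ¬ E v v)
    (C : Set V) (hC : StronglyConnected E C)
    (U : Set V) (hU : U = {v | v ∈ C ∩ VR ∧ ∃ w, E v w ∧ w ∉ C})
    (Z : Set V) (hZ : Z = {v | AttrR Set.univ E VR U v} ∩ C)
    (X : Set V) (hX : IsNontrivialEC E VR X) (hXC : X ⊆ C) :
    Z ∩ X = ∅ := by
  subst hU hZ
  have hX₂ : X.Nontrivial := (Set.one_lt_ncard_iff_nontrivial_and_finite.mp hX.2).1
  exact ((attractor_of_outgoing_random_misses_ECs_general hX.1 hX₂ hXC).mono_left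
    Set.inter_subset_left).inter_eq
end

section
/- Let P = (V, E, ⟨V₁, V_R⟩) be an MDP, let X be an end-component of P, let v ∈ X, and let P' be the MDP obtained from P by collapsing X to v. Then for every set D ⊆ V \ X: D is an end-component of P if and only if D is an end-component of P'. -/
/-- The edge relation of the MDP obtained by collapsing the set `X` to the vertex `v`:
edges of `E` avoiding `X`, plus an edge `(a, v)` for every `a ∉ X` with an `E`-edge into
`X`, plus an edge `(v, b)` for every `b ∉ X` with an `E`-edge from `X` into it. -/
def collapseE {V : Type*} (E : V → V → Prop) (X : Set V) (v : V) : V → V → Prop :=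
  fun a b =>
    (a ∉ X ∧ b ∉ X ∧ E a b) ∨
    (a ∉ X ∧ b = v ∧ ∃ x ∈ X, E a x) ∨
    (a = v ∧ b ∉ X ∧ ∃ x ∈ X, E x b)

/-!
Since `D` avoids both `X` and `v`, the collapse does not change the edges inside `D`, and it turns
each edge from `D` into `X` into an edge from `D` to `v`, which still leaves `D`. Hence strong
connectivity of `D` and closure of `D` under the edges of its random vertices are both preserved.
-/

theorem stronglyConnected_congr {V : Type*} {E E' : V → V → Prop} {U : Set V}
    (h : ∀ a ∈ U, ∀ b ∈ U, (E a b ↔ E' a b)) :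
    StronglyConnected E U ↔ StronglyConnected E' U := by
  have restrict_eq :
      (fun a b => a ∈ U ∧ b ∈ U ∧ E a b) = fun a b => a ∈ U ∧ b ∈ U ∧ E' a b := by
    ext a b
    exact and_congr_right fun ha => and_congr_right fun hb => h a ha b hb
  simp only [StronglyConnected, PathIn, restrict_eq]

section Collapse

variable {V : Type*} {E : V → V → Prop} {X D : Set V} {a b v : V}

theorem collapseE_iff_of_notMem_of_ne (haX : a ∉ X) (hav : a ≠ v) :
    collapseE E X v a b ↔ (b ∉ X ∧ E a b) ∨ (b = v ∧ ∃ x ∈ X, E a x) := by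
  simp only [collapseE, haX, hav, not_false_eq_true, true_and, false_and, or_false]

theorem collapseE_iff_of_notMem (haX : a ∉ X) (hbX : b ∉ X) (hav : a ≠ v) (hbv : b ≠ v) :
    collapseE E X v a b ↔ E a b := by
  simp only [collapseE_iff_of_notMem_of_ne haX hav, hbX, hbv, not_false_eq_true, true_and,
    false_and, or_false]

theorem stronglyConnected_collapseE_iff (hD : D ⊆ Xᶜ) (hvD : v ∉ D) :
    StronglyConnected (collapseE E X v) D ↔ StronglyConnected E D :=
  stronglyConnected_congr fun _ ha _ hb =>
    collapseE_iff_of_notMem (hD ha) (hD hb) (ne_of_mem_of_not_mem ha hvD)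
      (ne_of_mem_of_not_mem hb hvD)

theorem forall_collapseE_imp_mem_iff (hD : D ⊆ Xᶜ) (hvD : v ∉ D) (haX : a ∉ X) (hav : a ≠ v) :
    (∀ w, collapseE E X v a w → w ∈ D) ↔ ∀ w, E a w → w ∈ D := by
  simp only [collapseE_iff_of_notMem_of_ne haX hav]
  constructor
  · intro closed w haw
    by_cases hwX : w ∈ X
    · exact absurd (closed v (Or.inr ⟨rfl, w, hwX, haw⟩)) hvD
    · exact closed w (Or.inl ⟨hwX, haw⟩)
  · rintro closed w (⟨-, haw⟩ | ⟨-, x, hxX, hax⟩)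
    · exact closed w haw
    · exact absurd hxX (hD (closed x hax))

end Collapse

theorem collapse_EC_iff_of_disjoint_general {V : Type*} (E : V → V → Prop) (VR X : Set V) (v : V)
    (D : Set V) (hD : D ⊆ Xᶜ) (hvD : v ∉ D) :
    IsEC E VR D ↔ IsEC (collapseE E X v) (VR \ X) D := by
  have random_eq : D ∩ (VR \ X) = D ∩ VR := by
    rw [← Set.inter_sdiff_assoc]
    exact sdiff_eq_left.mpr ((Set.disjoint_left.mpr hD).mono_left Set.inter_subset_left)
  rw [IsEC, IsEC, random_eq]
  exact and_congr (stronglyConnected_collapseE_iff hD hvD).symm <|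
    forall₂_congr fun _ hu => (forall_collapseE_imp_mem_iff hD hvD (hD hu.1)
      (ne_of_mem_of_not_mem hu.1 hvD)).symm

/-- Collapsing an EC `X` to `v ∈ X` preserves the end-components disjoint from `X`:
for `D ⊆ V \ X`, `D` is an EC of the original MDP iff `D` is an EC of the collapsed MDP. -/
theorem collapse_EC_iff_of_disjoint {V : Type*} [Fintype V]
    (E : V → V → Prop) (VR : Set V) (hNoSelf : ∀ v : V, ¬ E v v)
    (X : Set V) (hX : IsEC E VR X) (v : V) (hv : v ∈ X)
    (D : Set V) (hD : D ⊆ Xᶜ) :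
    IsEC E VR D ↔ IsEC (collapseE E X v) (VR \ X) D :=
  collapse_EC_iff_of_disjoint_general E VR X v D hD fun hvD => hD hvD hv
end

section
/- Let P = (V, E, ⟨V₁, V_R⟩) be an MDP, let X be an end-component of P, let v ∈ X, and let P' be the MDP obtained from P by collapsing X to v. Then for every end-component D of P with D ∩ X ≠ ∅, the set (D \ X) ∪ {v} is an end-component of P'. -/
/-!
The map `collapseMap X v` sends `X` to `v` and fixes every vertex outside `X`. It carries each edge
of `P` to an edge of the collapsed MDP or contracts it to a point, so images of strongly connected
sets are strongly connected. Every edge that leaves a vertex `u ∉ X` in the collapsed MDP is the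
image of an edge leaving `u` in `P`, so images of end-components are closed under random edges.
Since `D` meets `X`, its image is `(D \ X) ∪ {v}`.
-/

section Image

variable {V W : Type*} {E : V → V → Prop} {E' : W → W → Prop} {U : Set V} {f : V → W}

theorem PathIn.image (hf : ∀ a ∈ U, ∀ b ∈ U, E a b → f a = f b ∨ E' (f a) (f b)) {u w : V}
    (h : PathIn E U u w) : PathIn E' (f '' U) (f u) (f w) := by
  refine Relation.ReflTransGen.lift' f (fun a b ⟨ha, hb, hab⟩ => ?_) u w h
  obtain heq | hedge := hf a ha b hb hab
  · rw [Function.onFun, heq]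
  · exact .single ⟨Set.mem_image_of_mem f ha, Set.mem_image_of_mem f hb, hedge⟩

theorem StronglyConnected.image (hf : ∀ a ∈ U, ∀ b ∈ U, E a b → f a = f b ∨ E' (f a) (f b))
    (hU : StronglyConnected E U) : StronglyConnected E' (f '' U) := by
  rintro _ ⟨u, hu, rfl⟩ _ ⟨w, hw, rfl⟩
  exact (hU u hu w hw).image hf

end Image

section Collapse

variable {V : Type*} {E : V → V → Prop} {VR X D : Set V} {u v w : V}

open Classical in
/-- The quotient map from an MDP to the MDP obtained by collapsing `X` to `v`. It takes values
in `V` because the collapsed MDP is encoded on the same vertex type. -/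
noncomputable def collapseMap (X : Set V) (v u : V) : V :=
  if u ∈ X then v else u

theorem collapseMap_of_mem (hu : u ∈ X) : collapseMap X v u = v :=
  if_pos hu

theorem collapseMap_of_notMem (hu : u ∉ X) : collapseMap X v u = u :=
  if_neg hu

theorem collapseMap_mem_iff (hv : v ∈ X) : collapseMap X v u ∈ X ↔ u ∈ X := by
  by_cases hu : u ∈ X
  · simp only [collapseMap_of_mem hu, hv, hu]
  · rw [collapseMap_of_notMem hu]

theorem image_collapseMap (hDX : (D ∩ X).Nonempty) :
    collapseMap X v '' D = (D \ X) ∪ {v} := by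
  have image_inter : collapseMap X v '' (D ∩ X) = {v} := by
    rw [Set.image_congr fun a ha => collapseMap_of_mem ha.2, hDX.image_const]
  have image_sdiff : collapseMap X v '' (D \ X) = D \ X := by
    rw [Set.image_congr fun a ha => collapseMap_of_notMem ha.2, Set.image_id']
  rw [← Set.sdiff_union_inter D X, Set.image_union, image_inter, image_sdiff,
    Set.sdiff_union_inter]

theorem collapseMap_eq_or_collapseE (huw : E u w) :
    collapseMap X v u = collapseMap X v w ∨
      collapseE E X v (collapseMap X v u) (collapseMap X v w) := by
  by_cases hu : u ∈ X <;> by_cases hw : w ∈ X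
  · exact .inl ((collapseMap_of_mem hu).trans (collapseMap_of_mem hw).symm)
  · rw [collapseMap_of_mem hu, collapseMap_of_notMem hw]
    exact .inr (.inr (.inr ⟨rfl, hw, u, hu, huw⟩))
  · rw [collapseMap_of_notMem hu, collapseMap_of_mem hw]
    exact .inr (.inr (.inl ⟨hu, rfl, w, hw, huw⟩))
  · rw [collapseMap_of_notMem hu, collapseMap_of_notMem hw]
    exact .inr (.inl ⟨hu, hw, huw⟩)

theorem exists_edge_of_collapseE (hv : v ∈ X) (hu : u ∉ X) (huw : collapseE E X v u w) :
    ∃ b, E u b ∧ collapseMap X v b = w := by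
  obtain ⟨_, hw, huw⟩ | ⟨_, rfl, x, hx, hux⟩ | ⟨rfl, _⟩ := huw
  · exact ⟨w, huw, collapseMap_of_notMem hw⟩
  · exact ⟨x, hux, collapseMap_of_mem hx⟩
  · exact absurd hv hu

theorem IsEC.image_collapseMap (hv : v ∈ X) (hD : IsEC E VR D) :
    IsEC (collapseE E X v) (VR \ X) (collapseMap X v '' D) := by
  refine ⟨hD.1.image fun _ _ _ _ => collapseMap_eq_or_collapseE, ?_⟩
  rintro _ ⟨⟨d, hdD, rfl⟩, hR, hX⟩ w hw
  have hdX : d ∉ X := mt (collapseMap_mem_iff hv).2 hX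
  rw [collapseMap_of_notMem hdX] at hR hw
  obtain ⟨b, hdb, rfl⟩ := exists_edge_of_collapseE hv hdX hw
  exact Set.mem_image_of_mem _ (hD.2 d ⟨hdD, hR⟩ b hdb)

theorem collapse_EC_of_meeting_general (hv : v ∈ X) (hD : IsEC E VR D) (hDX : (D ∩ X).Nonempty) :
    IsEC (collapseE E X v) (VR \ X) ((D \ X) ∪ {v}) :=
  image_collapseMap hDX ▸ hD.image_collapseMap hv

end Collapse

/-- If `D` is an EC of the original MDP meeting the collapsed EC `X`, then
`(D \ X) ∪ {v}` is an EC of the MDP obtained by collapsing `X` to `v`. -/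
theorem collapse_EC_of_meeting {V : Type*} [Fintype V]
    (E : V → V → Prop) (VR : Set V) (hNoSelf : ∀ v : V, ¬ E v v)
    (X : Set V) (hX : IsEC E VR X) (v : V) (hv : v ∈ X)
    (D : Set V) (hD : IsEC E VR D) (hDX : (D ∩ X).Nonempty) :
    IsEC (collapseE E X v) (VR \ X) ((D \ X) ∪ {v}) :=
  collapse_EC_of_meeting_general hv hD hDX
end

section
/- Let P = (V, E, ⟨V₁, V_R⟩) be an MDP, let X be an end-component of P, let v ∈ X, and let P' be the MDP obtained from P by collapsing X to v. Then for every end-component D of P' with v ∈ D, the set D ∪ X is an end-component of P. -/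
/-!
An edge of the collapsed graph that enters or leaves `v` comes from an edge of `E` that enters or
leaves `X` at some `x`, and inside the strongly connected set `X` there are paths `x ⟶ v` and
`v ⟶ x`. Hence every path of the collapsed graph within `D` expands to a path of `E` within
`D ∪ X`, and any two vertices of `D ∪ X` are connected through `v`.
-/

section PathIn

variable {V : Type*} {E : V → V → Prop} {U W : Set V} {u v w : V}

theorem PathIn.single (hu : u ∈ U) (hw : w ∈ U) (hE : E u w) : PathIn E U u w :=
  Relation.ReflTransGen.single ⟨hu, hw, hE⟩

theorem PathIn.trans (huv : PathIn E U u v) (hvw : PathIn E U v w) : PathIn E U u w :=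
  Relation.ReflTransGen.trans huv hvw

theorem PathIn.mono (hUW : U ⊆ W) (h : PathIn E U u w) : PathIn E W u w :=
  Relation.ReflTransGen.mono (fun _ _ ⟨ha, hb, hE⟩ => ⟨hUW ha, hUW hb, hE⟩) _ _ h

theorem StronglyConnected.of_pathIn_hub (hto : ∀ u ∈ U, PathIn E U u v)
    (hfrom : ∀ w ∈ U, PathIn E U v w) : StronglyConnected E U :=
  fun u hu w hw => (hto u hu).trans (hfrom w hw)

end PathIn

section Collapse

variable {V : Type*} {E : V → V → Prop} {X D : Set V} {v : V}

theorem StronglyConnected.pathIn_of_collapseE {U : Set V} {a b : V}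
    (hX : StronglyConnected E X) (hv : v ∈ X) (hXU : X ⊆ U) (ha : a ∈ U) (hb : b ∈ U)
    (hab : collapseE E X v a b) : PathIn E U a b := by
  rcases hab with ⟨-, -, hE⟩ | ⟨-, rfl, x, hx, hE⟩ | ⟨rfl, -, x, hx, hE⟩
  · exact .single ha hb hE
  · exact (PathIn.single ha (hXU hx) hE).trans ((hX x hx b hv).mono hXU)
  · exact ((hX a hv x hx).mono hXU).trans (.single (hXU hx) hb hE)

theorem StronglyConnected.pathIn_union_of_pathIn_collapseE {u w : V}
    (hX : StronglyConnected E X) (hv : v ∈ X) (h : PathIn (collapseE E X v) D u w) :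
    PathIn E (D ∪ X) u w :=
  Relation.reflTransGen_closed
    (fun _ _ ⟨ha, hb, hab⟩ =>
      hX.pathIn_of_collapseE hv Set.subset_union_right (.inl ha) (.inl hb) hab) _ _ h

theorem StronglyConnected.union_of_collapseE (hX : StronglyConnected E X) (hv : v ∈ X)
    (hD : StronglyConnected (collapseE E X v) D) (hvD : v ∈ D) :
    StronglyConnected E (D ∪ X) := by
  refine .of_pathIn_hub (v := v) ?_ ?_
  · rintro u (hu | hu)
    · exact hX.pathIn_union_of_pathIn_collapseE hv (hD u hu v hvD)
    · exact (hX u hu v hv).mono Set.subset_union_right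
  · rintro w (hw | hw)
    · exact hX.pathIn_union_of_pathIn_collapseE hv (hD v hvD w hw)
    · exact (hX v hv w hw).mono Set.subset_union_right

theorem random_closed_union_of_collapseE {VR : Set V}
    (hX : ∀ u ∈ X ∩ VR, ∀ w, E u w → w ∈ X)
    (hD : ∀ u ∈ D ∩ (VR \ X), ∀ w, collapseE E X v u w → w ∈ D) :
    ∀ u ∈ (D ∪ X) ∩ VR, ∀ w, E u w → w ∈ D ∪ X := by
  rintro u ⟨hu, huR⟩ w hE
  by_cases huX : u ∈ X
  · exact .inr (hX u ⟨huX, huR⟩ w hE)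
  by_cases hwX : w ∈ X
  · exact .inr hwX
  · exact .inl (hD u ⟨hu.resolve_right huX, huR, huX⟩ w (.inl ⟨huX, hwX, hE⟩))

theorem uncollapse_EC_general {VR : Set V} (hX : IsEC E VR X) (hv : v ∈ X)
    (hD : IsEC (collapseE E X v) (VR \ X) D) (hvD : v ∈ D) : IsEC E VR (D ∪ X) :=
  ⟨hX.1.union_of_collapseE hv hD.1 hvD, random_closed_union_of_collapseE hX.2 hD.2⟩

end Collapse

/-- If `D` is an EC of the MDP obtained by collapsing the EC `X` to `v`, and `v ∈ D`,
then `D ∪ X` is an EC of the original MDP. -/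
theorem uncollapse_EC {V : Type*} [Fintype V]
    (E : V → V → Prop) (VR : Set V) (hNoSelf : ∀ v : V, ¬ E v v)
    (X : Set V) (hX : IsEC E VR X) (v : V) (hv : v ∈ X)
    (D : Set V) (hD : IsEC (collapseE E X v) (VR \ X) D) (hvD : v ∈ D) :
    IsEC E VR (D ∪ X) :=
  uncollapse_EC_general hX hv hD hvD
end

section
/- Let P = (V, E, ⟨V₁, V_R⟩) be an MDP, let S ⊆ V, let T ⊆ S, and let A = Attr_R^{P[S]}(T) be the random attractor of T computed in the sub-MDP P[S]. If Q ⊆ S is a nontrivial end-component of P[S] with Q ∩ A ≠ ∅, then Q ∩ T ≠ ∅. -/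
/-- A trap for the random player: random vertices cannot leave `Q`, while player 1 can choose to
stay in `Q`. The random attractor of a set disjoint from `Q` therefore never reaches `Q`. In a
sub-MDP, `E` and `VR` are its own edge relation and its own random vertices. -/
def IsRandomTrap_s7 {V : Type*} (E : V → V → Prop) (VR Q : Set V) : Prop :=
  (∀ u ∈ Q ∩ VR, ∀ w, E u w → w ∈ Q) ∧ ∀ u ∈ Q \ VR, ∃ w ∈ Q, E u w

section

variable {V : Type*} {E : V → V → Prop} {VR S T Q : Set V}

theorem StronglyConnected.exists_edge_mem (hQ : StronglyConnected E Q) (hQ_nt : Q.Nontrivial)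
    {u : V} (hu : u ∈ Q) : ∃ w ∈ Q, E u w := by
  obtain ⟨x, hx, hxu⟩ := hQ_nt.exists_ne u
  obtain rfl | ⟨w, ⟨_, hw, huw⟩, _⟩ := Relation.ReflTransGen.cases_head (hQ u hu x hx)
  · exact absurd rfl hxu
  · exact ⟨w, hw, huw⟩

theorem IsEC.isRandomTrap_s7 (hQ : IsEC E VR Q) (hQ_nt : Q.Nontrivial) : IsRandomTrap_s7 E VR Q :=
  ⟨hQ.2, fun _ hu => hQ.1.exists_edge_mem hQ_nt hu.1⟩

theorem IsRandomTrap_s7.inter_nonempty_of_attrR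
    (hQ : IsRandomTrap_s7 (fun a b => a ∈ S ∧ b ∈ S ∧ E a b) (VR ∩ S) Q)
    {v : V} (hvA : AttrR S E VR T v) (hvQ : v ∈ Q) : (Q ∩ T).Nonempty := by
  induction hvA with
  | base hvT => exact ⟨_, hvQ, hvT⟩
  | rand hvS hvR hwS hvw _ ih => exact ih (hQ.1 _ ⟨hvQ, hvR, hvS⟩ _ ⟨hvS, hwS, hvw⟩)
  | play _ hvR _ ih =>
    obtain ⟨w, hwQ, _, hwS, hvw⟩ := hQ.2 _ ⟨hvQ, fun h => hvR h.1⟩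
    exact ih w hwS hvw hwQ

end

theorem EC_meeting_attractor_meets_target_general {V : Type*}
    (E : V → V → Prop) (VR S T Q : Set V)
    (hQ : IsEC (fun a b => a ∈ S ∧ b ∈ S ∧ E a b) (VR ∩ S) Q) (hQ_nt : Q.Nontrivial)
    (hQA : (Q ∩ {v | AttrR S E VR T v}).Nonempty) :
    (Q ∩ T).Nonempty := by
  obtain ⟨v, hvQ, hvA⟩ := hQA
  exact (hQ.isRandomTrap_s7 hQ_nt).inter_nonempty_of_attrR hvA hvQ

/-- Let `A` be the random attractor of `T ⊆ S` computed in the sub-MDP induced by `S`.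
If `Q ⊆ S` is a nontrivial end-component of the sub-MDP meeting `A`, then `Q` meets `T`. -/
theorem EC_meeting_attractor_meets_target {V : Type*} [Fintype V]
    (E : V → V → Prop) (VR : Set V) (hNoSelf : ∀ v : V, ¬ E v v)
    (S T : Set V) (hTS : T ⊆ S)
    (A : Set V) (hA : A = {v | AttrR S E VR T v})
    (Q : Set V) (hQS : Q ⊆ S)
    (hQ : IsNontrivialEC (fun a b => a ∈ S ∧ b ∈ S ∧ E a b) (VR ∩ S) Q)
    (hQA : (Q ∩ A).Nonempty) :
    (Q ∩ T).Nonempty := by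
  exact EC_meeting_attractor_meets_target_general E VR S T Q hQ.1
    (Set.one_lt_ncard_iff_nontrivial.mp hQ.2) (hA ▸ hQA)
end

section
/- Let P = (V, E, ⟨V₁, V_R⟩) be an MDP, let S' ⊆ V, let U = { v ∈ S' ∩ V_R : Out(v) ∩ (V \ S') ≠ ∅ }, and let Z = Attr_R^{P[S']}(U) be the random attractor of U in the sub-MDP P[S']. Let C be a strongly connected component of the subgraph induced by S' \ Z such that no edge of E goes from a vertex of C to a vertex of (S' \ Z) \ C, and |C| ≥ 2. Then C is a nontrivial end-component of P. -/
/-- `C` is a strongly connected component of the subgraph induced by `W`: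
a maximal strongly connected subset of `W`. -/
def IsSCCOf {V : Type*} (E : V → V → Prop) (W C : Set V) : Prop :=
  C ⊆ W ∧ StronglyConnected E C ∧
    ∀ C', C' ⊆ W → StronglyConnected E C' → C ⊆ C' → C' = C

/-- The random vertices of `S` with an edge leaving `S` (the set `U` of the paper), where the
sub-MDP induced by `S` loses a random edge. -/
def randomExits {V : Type*} (E : V → V → Prop) (VR S : Set V) : Set V :=
  {v | v ∈ S ∩ VR ∧ ∃ w, E v w ∧ w ∉ S}

/-- `W` is closed under the edges out of its random vertices. An end-component is a strongly
connected set with this property. -/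
def IsRandomClosed {V : Type*} (E : V → V → Prop) (VR W : Set V) : Prop :=
  ∀ u ∈ W ∩ VR, ∀ w, E u w → w ∈ W

section

variable {V : Type*} {E : V → V → Prop} {VR S T W C : Set V}

theorem isRandomClosed_diff_attrR (hT : randomExits E VR S ⊆ T) :
    IsRandomClosed E VR (S \ {v | AttrR S E VR T v}) := by
  rintro u ⟨⟨huS, hu_attr⟩, huR⟩ w huw
  have hwS : w ∈ S := by
    by_contra hwS
    exact hu_attr (.base (hT ⟨⟨huS, huR⟩, w, huw, hwS⟩))
  exact ⟨hwS, fun hw_attr => hu_attr (.rand huS huR hwS huw hw_attr)⟩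

theorem IsRandomClosed.of_no_edge_to_diff (hW : IsRandomClosed E VR W) (hCW : C ⊆ W)
    (hbot : ∀ a ∈ C, ∀ b ∈ W \ C, ¬ E a b) : IsRandomClosed E VR C := by
  rintro u ⟨huC, huR⟩ w huw
  have hwW : w ∈ W := hW u ⟨hCW huC, huR⟩ w huw
  by_contra hwC
  exact hbot u huC w ⟨hwW, hwC⟩ huw

theorem bottom_SCC_is_nontrivial_EC_general (hT : randomExits E VR S ⊆ T)
    (hCS : C ⊆ S \ {v | AttrR S E VR T v}) (hC : StronglyConnected E C)
    (hbot : ∀ a ∈ C, ∀ b ∈ (S \ {v | AttrR S E VR T v}) \ C, ¬ E a b)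
    (hcard : 2 ≤ C.ncard) :
    IsNontrivialEC E VR C :=
  have hclosed : IsRandomClosed E VR C :=
    (isRandomClosed_diff_attrR hT).of_no_edge_to_diff hCS hbot
  ⟨⟨hC, hclosed⟩, hcard⟩

end

/-- Let `U` be the random vertices of `S'` with an edge leaving `S'`, and `Z` the
random attractor of `U` in the sub-MDP induced by `S'`.  Every bottom SCC `C` of the
subgraph induced by `S' \ Z` (no edge from `C` to the rest of `S' \ Z`) with at least
two vertices is a nontrivial end-component of the MDP. -/
theorem bottom_SCC_is_nontrivial_EC {V : Type*} [Fintype V]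
    (E : V → V → Prop) (VR : Set V) (hNoSelf : ∀ v : V, ¬ E v v)
    (hOut : ∀ v : V, ∃ w, E v w)
    (S' : Set V)
    (U : Set V) (hU : U = {v | v ∈ S' ∩ VR ∧ ∃ w, E v w ∧ w ∉ S'})
    (Z : Set V) (hZ : Z = {v | AttrR S' E VR U v})
    (C : Set V) (hC : IsSCCOf E (S' \ Z) C)
    (hbot : ∀ a ∈ C, ∀ b ∈ (S' \ Z) \ C, ¬ E a b)
    (hcard : 2 ≤ C.ncard) :
    IsNontrivialEC E VR C := by
  subst hZ
  exact bottom_SCC_is_nontrivial_EC_general hU.ge hC.1 hC.2.1 hbot hcard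
end

section
/- Let P = (V, E, ⟨V₁, V_R⟩) be an MDP, let X ⊆ V, let A = Attr_R^P(X) be the random attractor of X in P, and let W = V \ A. Then every end-component of the sub-MDP P[W] is an end-component of P. -/
/-! An edge at a random vertex outside the attractor cannot lead into the attractor, since
otherwise the attractor would have absorbed that vertex. So removing the attractor deletes no edge
at a surviving random vertex, and an end-component remains one when edges at player-1 vertices are
restored. -/

section

variable {V : Type*} {E E' : V → V → Prop} {VR VR' S T U : Set V}

/-- The edge relation of the sub-MDP `P[S]`, as a relation on all of `V`: vertices outside `S`
stay in the type but become isolated. -/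
def InducedEdge (E : V → V → Prop) (S : Set V) : V → V → Prop :=
  fun a b => a ∈ S ∧ b ∈ S ∧ E a b

theorem inducedEdge_univ (E : V → V → Prop) : InducedEdge E Set.univ = E := by
  funext a b
  simp only [InducedEdge, Set.mem_univ, true_and]

theorem StronglyConnected.mono (hE : ∀ a ∈ U, ∀ b ∈ U, E' a b → E a b)
    (hU : StronglyConnected E' U) : StronglyConnected E U :=
  fun u hu w hw => Relation.ReflTransGen.mono
    (fun a b ⟨ha, hb, hab⟩ => ⟨ha, hb, hE a ha b hb hab⟩) _ _ (hU u hu w hw)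

theorem IsEC.of_edges_le (hE : ∀ a ∈ U, ∀ b ∈ U, E' a b → E a b)
    (hVR : ∀ u ∈ U ∩ VR, u ∈ VR' ∧ ∀ w, E u w → E' u w) (hU : IsEC E' VR' U) :
    IsEC E VR U := by
  refine ⟨hU.1.mono hE, fun u hu w huw => ?_⟩
  obtain ⟨hu', hback⟩ := hVR u hu
  exact hU.2 u ⟨hu.1, hu'⟩ w (hback w huw)

theorem mem_sdiff_attrR_of_random_edge {u w : V} (hu : u ∈ S \ {v | AttrR S E VR T v})
    (hur : u ∈ VR) (hw : w ∈ S) (huw : E u w) : w ∈ S \ {v | AttrR S E VR T v} :=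
  ⟨hw, fun hwA => hu.2 (.rand hu.1 hur hw huw hwA)⟩

end

theorem EC_of_subMDP_after_attractor_removal_general {V : Type*} {E : V → V → Prop}
    {VR S X W U : Set V} (hW : W = S \ {v | AttrR S E VR X v}) (hUW : U ⊆ W)
    (hU : IsEC (InducedEdge E W) (VR ∩ W) U) :
    IsEC (InducedEdge E S) (VR ∩ S) U := by
  subst hW
  refine hU.of_edges_le (fun a _ b _ ⟨ha, hb, hab⟩ => ⟨ha.1, hb.1, hab⟩) ?_
  rintro u ⟨huU, hur, -⟩
  refine ⟨⟨hur, hUW huU⟩, fun w ⟨_, hw, huw⟩ => ⟨hUW huU, ?_, huw⟩⟩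
  exact mem_sdiff_attrR_of_random_edge (hUW huU) hur hw huw

/-- Let `A` be the random attractor of `X` in the MDP and `W = V \ A`.  Then every
end-component of the sub-MDP induced by `W` is an end-component of the MDP. -/
theorem EC_of_subMDP_after_attractor_removal {V : Type*} [Fintype V]
    (E : V → V → Prop) (VR : Set V) (hNoSelf : ∀ v : V, ¬ E v v)
    (X : Set V)
    (A : Set V) (hA : A = {v | AttrR Set.univ E VR X v})
    (W : Set V) (hW : W = Aᶜ)
    (U : Set V) (hUW : U ⊆ W)
    (hU : IsEC (fun a b => a ∈ W ∧ b ∈ W ∧ E a b) (VR ∩ W) U) :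
    IsEC E VR U := by
  rw [hA, Set.compl_eq_univ_sdiff] at hW
  simpa only [inducedEdge_univ, Set.inter_univ] using
    EC_of_subMDP_after_attractor_removal_general hW hUW hU
end

section
/- Let G = (V, E) be a finite directed graph, let X ⊆ V be a strongly connected set with |X| = k ≥ 2, let r ∈ X, and let γ be a positive integer such that q = ⌊γ / (2·log₂ k)⌋ ≥ 1. If there exists a vertex v ∈ X whose distance from r within the subgraph induced by X is at least γ, then there exists a nonempty set T ⊆ X such that every strongly connected component of the subgraph induced by X \ T has at most k − q·|T| vertices (i.e., T is a q-separator of X). -/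
/-- `reachIn E n a b`: there is a directed path of exactly `n` edges from `a` to `b`. -/
def reachIn {V : Type*} (E : V → V → Prop) : ℕ → V → V → Prop
  | 0, a, b => a = b
  | n + 1, a, c => ∃ b, E a b ∧ reachIn E n b c

/-!
Let `B i` be the set of vertices of `X` within distance `i` of `r`. Edges leaving `B i` end in
`B (i + 1)`, so once the layer `B (i + 1) \ B i` is removed, a strongly connected set lies either
in `B i` or outside `B (i + 1)`. The layer is therefore a `q`-separator as soon as `q` times its
size is at most both `|B (i + 1)|` and `|X \ B i|`. If this failed for every `i < γ - 1`, then at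
each step either `|B i|` would grow or `|X \ B i|` would shrink by a factor at least
`exp (1 / q)`, so `log |B i| - log |X \ B i|` would increase by `1 / q`. But this quantity stays
between `-log (k - 1)` and `log (k - 1)`, which leaves room for at most `2 q log (k - 1)` steps,
and this is less than `γ - 1` because `log (k - 1) + 1 / 2 < log₂ k`.
-/

section Reachability

variable {V : Type*} {R : V → V → Prop} {S : Set V} {r a b c : V} {i n : ℕ}

theorem mem_of_reflTransGen (hS : ∀ x ∈ S, ∀ y, R x y → y ∈ S)
    (hab : Relation.ReflTransGen R a b) (ha : a ∈ S) : b ∈ S := by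
  induction hab with
  | refl => exact ha
  | tail _ hxy hx => exact hS _ hx _ hxy

theorem reachIn.reflTransGen (h : reachIn R n a b) : Relation.ReflTransGen R a b := by
  induction n generalizing a with
  | zero => exact h ▸ .refl
  | succ n ih =>
    obtain ⟨c, hac, hcb⟩ := h
    exact .head hac (ih hcb)

theorem reachIn.snoc (hab : reachIn R n a b) (hbc : R b c) : reachIn R (n + 1) a c := by
  induction n generalizing a with
  | zero => exact ⟨c, Eq.symm hab ▸ hbc, rfl⟩
  | succ n ih =>
    obtain ⟨d, had, hdb⟩ := hab
    exact ⟨d, had, ih hdb⟩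

/-- The out-ball of radius `i` around `r`: the vertices at distance at most `i` from `r` along
`R`. The layers between consecutive out-balls are the candidate separators. -/
def outBall (R : V → V → Prop) (r : V) (i : ℕ) : Set V :=
  {x | ∃ n ≤ i, reachIn R n r x}

theorem mem_outBall_self (R : V → V → Prop) (r : V) (i : ℕ) : r ∈ outBall R r i :=
  ⟨0, i.zero_le, rfl⟩

theorem outBall_mono (R : V → V → Prop) (r : V) : Monotone (outBall R r) :=
  fun _ _ hij _ ⟨n, hn, h⟩ ↦ ⟨n, hn.trans hij, h⟩

theorem mem_outBall_succ (ha : a ∈ outBall R r i) (hab : R a b) : b ∈ outBall R r (i + 1) := by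
  obtain ⟨n, hn, h⟩ := ha
  exact ⟨n + 1, Nat.succ_le_succ hn, h.snoc hab⟩

theorem outBall_subset (hS : ∀ x ∈ S, ∀ y, R x y → y ∈ S) (hr : r ∈ S) : outBall R r i ⊆ S :=
  fun _ ⟨_, _, h⟩ ↦ mem_of_reflTransGen hS h.reflTransGen hr

theorem outBall_succ_sdiff_nonempty (hra : Relation.ReflTransGen R r a)
    (ha : a ∉ outBall R r i) : (outBall R r (i + 1) \ outBall R r i).Nonempty := by
  rw [Set.sdiff_nonempty]
  intro hsub
  exact ha <| mem_of_reflTransGen (fun _ hx _ hxy ↦ hsub (mem_outBall_succ hx hxy)) hra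
    (mem_outBall_self R r i)

end Reachability

section Separator

variable {V : Type*} {E : V → V → Prop} {A B C X : Set V} {q : ℝ}

/-- The edge relation of the subgraph induced by `X`, so that `PathIn E X` is by definition its
reflexive transitive closure. -/
abbrev InducedAdj (E : V → V → Prop) (X : Set V) : V → V → Prop :=
  fun a b ↦ a ∈ X ∧ b ∈ X ∧ E a b

/-- `T` is a `q`-separator of `X`. The parameter `q` is real, so that no rounding of
`γ / (2 log₂ k)` is needed. -/
def IsSeparator (E : V → V → Prop) (X : Set V) (q : ℝ) (T : Set V) : Prop :=
  T ⊆ X ∧ T.Nonempty ∧ ∀ C, IsSCCOf E (X \ T) C → (C.ncard : ℝ) ≤ X.ncard - q * T.ncard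

theorem StronglyConnected.subset_of_mem (hC : StronglyConnected E C) {c : V} (hcC : c ∈ C)
    (hcA : c ∈ A) (hA : ∀ x ∈ A, ∀ y ∈ C, E x y → y ∈ A) : C ⊆ A :=
  fun y hy ↦ mem_of_reflTransGen (fun x hx y hxy ↦ hA x hx y hxy.2.1 hxy.2.2) (hC c hcC y hy) hcA

theorem StronglyConnected.subset_or_subset_sdiff (hC : StronglyConnected E C)
    (hCX : C ⊆ X \ (B \ A)) (hE : ∀ x ∈ A, ∀ y ∈ X, E x y → y ∈ B) :
    C ⊆ A ∨ C ⊆ X \ B := by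
  have mem_A {y : V} (hyC : y ∈ C) (hyB : y ∈ B) : y ∈ A :=
    by_contra fun hyA ↦ (hCX hyC).2 ⟨hyB, hyA⟩
  by_cases hCA : ∃ c ∈ C, c ∈ A
  · obtain ⟨c, hcC, hcA⟩ := hCA
    exact .inl <| hC.subset_of_mem hcC hcA fun x hx y hy hxy ↦
      mem_A hy (hE x hx y (hCX hy).1 hxy)
  · exact .inr fun y hy ↦ ⟨(hCX hy).1, fun hyB ↦ hCA ⟨y, hy, mem_A hy hyB⟩⟩

theorem isSeparator_sdiff (hX : X.Finite) (hAX : A ⊆ X) (hBX : B ⊆ X)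
    (hBA : (B \ A).Nonempty) (hE : ∀ x ∈ A, ∀ y ∈ X, E x y → y ∈ B)
    (hB : q * (B \ A).ncard ≤ B.ncard) (hA : q * (B \ A).ncard ≤ X.ncard - A.ncard) :
    IsSeparator E X q (B \ A) := by
  refine ⟨Set.sdiff_subset.trans hBX, hBA, fun C ⟨hCX, hC, _⟩ ↦ ?_⟩
  obtain hCA | hCB := hC.subset_or_subset_sdiff hCX hE
  · have hcard : (C.ncard : ℝ) ≤ A.ncard := by
      exact_mod_cast Set.ncard_le_ncard hCA (hX.subset hAX)
    linarith
  · have hcard : (C.ncard : ℝ) ≤ (X \ B).ncard := by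
      exact_mod_cast Set.ncard_le_ncard hCB hX.sdiff
    have hsplit : ((X \ B).ncard : ℝ) + B.ncard = X.ncard := by
      exact_mod_cast Set.ncard_sdiff_add_ncard_of_subset hBX hX
    linarith

theorem outBall_inducedAdj_subset {r : V} {i : ℕ} (hr : r ∈ X) :
    outBall (InducedAdj E X) r i ⊆ X :=
  outBall_subset (fun _ _ _ hxy ↦ hxy.2.1) hr

theorem isSeparator_outBall_sdiff {r v : V} {i : ℕ} (hX : X.Finite) (hr : r ∈ X)
    (hrv : PathIn E X r v) (hv : v ∉ outBall (InducedAdj E X) r i)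
    (hgrow : q * ((outBall (InducedAdj E X) r (i + 1)).ncard -
        (outBall (InducedAdj E X) r i).ncard) ≤ (outBall (InducedAdj E X) r (i + 1)).ncard)
    (hshrink : q * ((outBall (InducedAdj E X) r (i + 1)).ncard -
        (outBall (InducedAdj E X) r i).ncard) ≤ X.ncard - (outBall (InducedAdj E X) r i).ncard) :
    IsSeparator E X q
      (outBall (InducedAdj E X) r (i + 1) \ outBall (InducedAdj E X) r i) := by
  have hBX (j : ℕ) : outBall (InducedAdj E X) r j ⊆ X := outBall_inducedAdj_subset hr
  rw [← Set.cast_ncard_sdiff (outBall_mono _ r i.le_succ) (hX.subset (hBX _))] at hgrow hshrink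
  exact isSeparator_sdiff hX (hBX i) (hBX (i + 1)) (outBall_succ_sdiff_nonempty hrv hv)
    (fun x hx y hy hxy ↦ mem_outBall_succ hx ⟨hBX i hx, hy, hxy⟩) hgrow hshrink

end Separator

section Growth

variable {N q x y : ℝ}

theorem log_add_inv_le_log (hq : 0 < q) (hx : 0 < x) (hy : 0 < y) (h : x ≤ q * (x - y)) :
    Real.log y + q⁻¹ ≤ Real.log x := by
  have hratio : y / x - 1 ≤ -q⁻¹ := by
    field_simp
    linarith
  have hlog : Real.log y - Real.log x ≤ y / x - 1 :=
    Real.log_div hy.ne' hx.ne' ▸ Real.log_le_sub_one_of_pos (div_pos hy hx)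
  linarith

theorem log_sub_log_add_inv_le (hq : 0 < q) (hx : 0 < x) (hxy : x ≤ y) (hyN : y < N)
    (h : y < q * (y - x) ∨ N - x < q * (y - x)) :
    Real.log x - Real.log (N - x) + q⁻¹ ≤ Real.log y - Real.log (N - y) := by
  have hlog : Real.log x ≤ Real.log y := Real.log_le_log hx hxy
  have hlog_compl : Real.log (N - y) ≤ Real.log (N - x) :=
    Real.log_le_log (by linarith) (by linarith)
  obtain hgrow | hshrink := h
  · linarith [log_add_inv_le_log hq (hx.trans_le hxy) hx hgrow.le]
  · linarith [log_add_inv_le_log (x := N - x) (y := N - y) hq (by linarith) (by linarith)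
      (by linarith)]

theorem abs_log_sub_log_le (hx : 1 ≤ x) (hxN : x ≤ N - 1) :
    |Real.log x - Real.log (N - x)| ≤ Real.log (N - 1) :=
  abs_sub_le_of_nonneg_of_le (Real.log_nonneg hx) (Real.log_le_log (by linarith) hxN)
    (Real.log_nonneg (by linarith)) (Real.log_le_log (by linarith) (by linarith))

theorem exists_mul_increment_le {a : ℕ → ℝ} {m : ℕ} (ha : Monotone a) (ha0 : 1 ≤ a 0)
    (ham : a m ≤ N - 1) (hq : 0 < q) (hm : 2 * q * Real.log (N - 1) < m) :
    ∃ i < m, q * (a (i + 1) - a i) ≤ a (i + 1) ∧ q * (a (i + 1) - a i) ≤ N - a i := by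
  by_contra! hlarge
  have hpos (i : ℕ) : 1 ≤ a i := ha0.trans (ha i.zero_le)
  have hle {i : ℕ} (hi : i ≤ m) : a i ≤ N - 1 := (ha hi).trans ham
  let φ : ℕ → ℝ := fun i ↦ Real.log (a i) - Real.log (N - a i)
  have hstep : ∀ i ∈ Finset.range m, q⁻¹ ≤ φ (i + 1) - φ i := by
    intro i hi
    have him : i < m := Finset.mem_range.1 hi
    have hbig := (lt_or_ge _ _).imp_right (hlarge i him)
    exact le_sub_iff_add_le'.2 <| log_sub_log_add_inv_le hq (by linarith [hpos i])
      (ha i.le_succ) (by linarith [hle him]) hbig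
  have htotal : m * q⁻¹ ≤ φ m - φ 0 := by
    rw [← Finset.sum_range_sub]
    simpa only [Finset.card_range, nsmul_eq_mul] using Finset.card_nsmul_le_sum _ _ _ hstep
  have hφm : |φ m| ≤ Real.log (N - 1) := abs_log_sub_log_le (hpos m) ham
  have hφ0 : |φ 0| ≤ Real.log (N - 1) := abs_log_sub_log_le ha0 (hle m.zero_le)
  have hsteps : m / q ≤ 2 * Real.log (N - 1) := by
    rw [div_eq_mul_inv]
    linarith [le_of_abs_le hφm, neg_le_of_abs_le hφ0]
  rw [div_le_iff₀ hq] at hsteps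
  linarith

theorem log_sub_one_add_half_lt_logb_two (hx : 2 ≤ x) :
    Real.log (x - 1) + 1 / 2 < Real.logb 2 x := by
  have hlog2_gt : 0.69 < Real.log 2 := by linarith [Real.log_two_gt_d9]
  have hlog2_lt : Real.log 2 < 0.7 := by linarith [Real.log_two_lt_d9]
  have hlog_pred : Real.log (x - 1) ≤ Real.log x - x⁻¹ := by
    have := log_add_inv_le_log (q := x) (x := x) (y := x - 1)
      (by linarith) (by linarith) (by linarith) (by linarith)
    linarith
  have hlog : Real.log 2 + (1 - 2 * x⁻¹) ≤ Real.log x := by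
    have := Real.one_sub_inv_le_log_of_pos (x := x / 2) (by linarith)
    rw [Real.log_div (by linarith) two_ne_zero, inv_div, div_eq_mul_inv] at this
    linarith
  have hlogb : 10 / 7 * Real.log x ≤ Real.logb 2 x := by
    rw [Real.logb, le_div_iff₀ (by linarith)]
    nlinarith [Real.log_nonneg (by linarith : 1 ≤ x)]
  have hinv : 0 < x⁻¹ := by positivity
  linarith

theorem two_mul_mul_log_sub_one_lt {g : ℝ} (hN : 2 ≤ N) (hq1 : 1 ≤ q)
    (hq : q ≤ g / (2 * Real.logb 2 N)) : 2 * q * Real.log (N - 1) < g - 1 := by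
  have hlogb : 0 < Real.logb 2 N := Real.logb_pos one_lt_two (by linarith)
  rw [le_div_iff₀ (by positivity)] at hq
  have hlog : q * (Real.log (N - 1) + 1 / 2) < q * Real.logb 2 N :=
    mul_lt_mul_of_pos_left (log_sub_one_add_half_lt_logb_two hN) (by linarith)
  linarith

end Growth

theorem exists_isSeparator_outBall_sdiff {V : Type*} {E : V → V → Prop} {X : Set V} {r v : V}
    {m : ℕ} {q : ℝ} (hX : X.Finite) (hr : r ∈ X) (hrv : PathIn E X r v)
    (hv : v ∉ outBall (InducedAdj E X) r m) (hq : 0 < q)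
    (hm : 2 * q * Real.log (X.ncard - 1) < m) :
    ∃ i < m, IsSeparator E X q
      (outBall (InducedAdj E X) r (i + 1) \ outBall (InducedAdj E X) r i) := by
  let B := outBall (InducedAdj E X) r
  have hBX (i : ℕ) : B i ⊆ X := outBall_inducedAdj_subset hr
  have hB : Monotone B := outBall_mono _ r
  have hmono : Monotone fun i ↦ ((B i).ncard : ℝ) := fun i j hij ↦
    Nat.cast_le.2 <| Set.ncard_le_ncard (hB hij) (hX.subset (hBX j))
  have hB0 : (1 : ℝ) ≤ (B 0).ncard := by
    exact_mod_cast (Set.ncard_pos (hX.subset (hBX 0))).2 ⟨r, mem_outBall_self _ r 0⟩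
  have hBm : ((B m).ncard : ℝ) ≤ X.ncard - 1 := by
    have hvX : v ∈ X := mem_of_reflTransGen (fun _ _ _ hxy ↦ hxy.2.1) hrv hr
    have hlt : (B m).ncard < X.ncard :=
      Set.ncard_lt_ncard ((hBX m).ssubset_of_mem_notMem hvX hv) hX
    rw [le_sub_iff_add_le]
    exact_mod_cast hlt
  obtain ⟨i, him, hgrow, hshrink⟩ := exists_mul_increment_le hmono hB0 hBm hq hm
  have hvi : v ∉ B i := fun hi ↦ hv (hB him.le hi)
  exact ⟨i, him, isSeparator_outBall_sdiff hX hr hrv hvi hgrow hshrink⟩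

theorem separator_exists_general {V : Type*} (E : V → V → Prop) {X : Set V}
    (hX : 2 ≤ X.ncard) {r v : V} (hr : r ∈ X) (hrv : PathIn E X r v) {γ : ℕ} {q : ℝ} (hq1 : 1 ≤ q)
    (hq : q ≤ γ / (2 * Real.logb 2 X.ncard))
    (hfar : ∀ n, reachIn (InducedAdj E X) n r v → γ ≤ n) :
    ∃ T, IsSeparator E X q T := by
  have hcard : (2 : ℝ) ≤ X.ncard := by exact_mod_cast hX
  have hγ : 2 * q * Real.log (X.ncard - 1) < γ - 1 := two_mul_mul_log_sub_one_lt hcard hq1 hq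
  have hγ1 : 1 ≤ γ := by
    have hlog : 0 ≤ Real.log (X.ncard - 1) := Real.log_nonneg (by linarith)
    have hpos : (0 : ℝ) < γ := by linarith [mul_nonneg (by linarith : 0 ≤ 2 * q) hlog]
    exact_mod_cast hpos
  have hv : v ∉ outBall (InducedAdj E X) r (γ - 1) := fun ⟨n, hle, hn⟩ ↦ by
    have := hfar n hn
    omega
  obtain ⟨i, _, hsep⟩ := exists_isSeparator_outBall_sdiff
    (Set.finite_of_ncard_pos (by omega)) hr hrv hv (by linarith : 0 < q)
    (by rwa [Nat.cast_sub hγ1, Nat.cast_one])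
  exact ⟨_, hsep⟩

/-- Let `X` be a strongly connected set with `|X| = k ≥ 2`, `r ∈ X`, and `γ ≥ 1` with
`q = ⌊γ / (2 log₂ k)⌋ ≥ 1`.  If some `v ∈ X` has distance at least `γ` from `r` within
the subgraph induced by `X`, then `X` has a `q`-separator: a nonempty `T ⊆ X` such that
every SCC of the subgraph induced by `X \ T` has at most `k - q * |T|` vertices. -/
theorem separator_exists {V : Type*} [Fintype V]
    (E : V → V → Prop)
    (X : Set V) (hX : StronglyConnected E X)
    (k : ℕ) (hk : X.ncard = k) (hk2 : 2 ≤ k)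
    (r : V) (hr : r ∈ X)
    (γ : ℕ) (hγ : 1 ≤ γ)
    (q : ℕ) (hq : q = ⌊(γ : ℝ) / (2 * Real.logb 2 (k : ℝ))⌋₊) (hq1 : 1 ≤ q)
    (hfar : ∃ v ∈ X, ∀ n : ℕ,
      reachIn (fun a b => a ∈ X ∧ b ∈ X ∧ E a b) n r v → γ ≤ n) :
    ∃ T : Set V, T ⊆ X ∧ T.Nonempty ∧
      ∀ C : Set V, IsSCCOf E (X \ T) C →
        (C.ncard : ℤ) ≤ (k : ℤ) - (q : ℤ) * T.ncard := by
  subst hk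
  obtain ⟨v, hv, hfar⟩ := hfar
  obtain ⟨T, hTX, hT, hsep⟩ := separator_exists_general E hk2 hr (hX r hr v hv)
    (q := q) (by exact_mod_cast hq1) ((Nat.le_floor_iff' (by omega)).1 hq.le) hfar
  exact ⟨T, hTX, hT, fun C hC ↦ by exact_mod_cast hsep C hC⟩
end
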